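/- Min-max interchange for the penalised primal problem: Let μ₁,…,μ_n be Borel probability measures on ℝ₊ with finite first moments, 𝔓 ⊆ Ω closed with M⁻_{μ,𝔓} ≠ ∅, and G : ℝ₊^n → [−∞, ∞) upper semi-continuous with G(s₁,…,s_n) ≤ K(1 + s₁ + … + s_n) for some constant K and sup_{ℙ ∈ M⁻_{μ,𝔓}} E_ℙ[G] > −∞. With λ_𝔓(s₁,…,s_n) := (1 + s₁ + … + s_n) · 1{(s₁,…,s_n) ∉ 𝔓} and G^{(N)} := G − N λ_𝔓, one has inf_{N ≥ 1} sup_{ℙ ∈ M⁻_μ} E_ℙ[G^{(N)}] = sup_{ℙ ∈ M⁻_μ} inf_{N ≥ 1} E_ℙ[G^{(N)}] = sup_{ℙ ∈ M⁻_{μ,𝔓}} E_ℙ[G]. -/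

import Mathlib

open MeasureTheory Set Filter Topology
open scoped ENNReal NNReal Classical

noncomputable section

namespace RobustFin

/-- Canonical path space: the values `S₀, S₁, …, S_n` of the asset. -/
abbrev Path (n : ℕ) := Fin (n + 1) → ℝ

/-- Paths starting at `s₀` with nonnegative coordinates: the canonical space `Ω`. -/
def Omega (n : ℕ) (s₀ : ℝ) : Set (Path n) := {ω | ω 0 = s₀ ∧ ∀ i, 0 ≤ ω i}

/-- The first `j` coordinates `S₁, …, S_j` of a path. -/
def restr {n : ℕ} (j : Fin n) (ω : Path n) : Fin j → ℝ :=
  fun i => ω ⟨(i : ℕ) + 1, by have h1 := i.isLt; have h2 := j.isLt; omega⟩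

/-- The coordinates `S₁, …, S_n` of a path. -/
def tailCoords {n : ℕ} (ω : Path n) : Fin n → ℝ := fun i => ω i.succ

/-- A dynamic trading strategy: bounded measurable positions `Δ_j(S₁,…,S_j)`. -/
structure Dyn (n : ℕ) where
  pos : (j : Fin n) → (Fin j → ℝ) → ℝ
  meas : ∀ j, Measurable (pos j)
  bdd : ∀ j, ∃ C, ∀ x, |pos j x| ≤ C

/-- No short selling: all dynamic positions are nonnegative. -/
def Dyn.Nonneg {n : ℕ} (D : Dyn n) : Prop := ∀ j x, 0 ≤ D.pos j x

/-- Gains from dynamic trading: `Σ_j Δ_j(S₁,…,S_j)(S_{j+1} − S_j)`. -/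
def Dyn.gains {n : ℕ} (D : Dyn n) (ω : Path n) : ℝ :=
  ∑ j : Fin n, D.pos j (restr j ω) * (ω j.succ - ω j.castSucc)

/-- A static option portfolio: a constant (cash) position plus a finite linear
combination of options with maturity indices `idx` and nonnegative strikes. -/
structure Static (n : ℕ) where
  const : ℝ
  m : ℕ
  coeff : Fin m → ℝ
  idx : Fin m → Fin n
  strike : Fin m → ℝ
  strike_nonneg : ∀ k, 0 ≤ strike k

/-- Payoff of the portfolio when the options are call options. -/
def Static.callPayoff {n : ℕ} (X : Static n) (ω : Path n) : ℝ :=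
  X.const + ∑ k, X.coeff k * max (ω (X.idx k).succ - X.strike k) 0

/-- Payoff of the portfolio when the options are put options. -/
def Static.putPayoff {n : ℕ} (X : Static n) (ω : Path n) : ℝ :=
  X.const + ∑ k, X.coeff k * max (X.strike k - ω (X.idx k).succ) 0

/-- Price of a static portfolio, given the unit option prices `c i K`;
this is the (unique) linear pricing functional determined by the prices. -/
def Static.price {n : ℕ} (X : Static n) (c : Fin n → ℝ → ℝ) : ℝ :=
  X.const + ∑ k, X.coeff k * c (X.idx k) (X.strike k)

/-- Expectation of a real payoff, valued in `EReal`, with the convention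
`∞ − ∞ = −∞` (in `EReal`, `⊤ - ⊤ = ⊥`). -/
def eexp {n : ℕ} (P : Measure (Path n)) (f : Path n → ℝ) : EReal :=
  ((∫⁻ ω, ENNReal.ofReal (f ω) ∂P : ℝ≥0∞) : EReal) -
    ((∫⁻ ω, ENNReal.ofReal (-(f ω)) ∂P : ℝ≥0∞) : EReal)

/-- The positive part of an extended real number, in `ℝ≥0∞`. -/
def posE (x : EReal) : ℝ≥0∞ := if x = ⊤ then ⊤ else ENNReal.ofReal x.toReal

/-- Expectation of an `EReal`-valued payoff, with the convention `∞ − ∞ = −∞`. -/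
def eexpE {n : ℕ} (P : Measure (Path n)) (f : Path n → EReal) : EReal :=
  ((∫⁻ ω, posE (f ω) ∂P : ℝ≥0∞) : EReal) - ((∫⁻ ω, posE (-(f ω)) ∂P : ℝ≥0∞) : EReal)

/-- A market calibrated model for the market with static payoffs `pay` (calls or puts),
prices `c` and prediction set `P`. -/
def Calibrated {n : ℕ} (pay : Static n → Path n → ℝ) (c : Fin n → ℝ → ℝ)
    (P : Set (Path n)) (Q : Measure (Path n)) : Prop :=
  IsProbabilityMeasure Q ∧ Q P = 1 ∧
    ∀ (X : Static n) (D : Dyn n), D.Nonneg →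
      eexp Q (fun ω => pay X ω + D.gains ω) ≤ (X.price c : EReal)

/-- A weak free lunch with vanishing risk. -/
def WFLVR {n : ℕ} (pay : Static n → Path n → ℝ) (c : Fin n → ℝ → ℝ)
    (P : Set (Path n)) : Prop :=
  ∃ (Xs : ℕ → Static n) (Ds : ℕ → Dyn n) (X : Static n) (D : Dyn n) (L : ℝ),
    (∀ k, (Ds k).Nonneg) ∧ D.Nonneg ∧
    (∀ ω ∈ P, Tendsto (fun k => pay (Xs k) ω + (Ds k).gains ω) atTop (nhds 0)) ∧
    (∀ k, ∀ ω ∈ P, pay X ω + D.gains ω ≤ pay (Xs k) ω + (Ds k).gains ω) ∧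
    Tendsto (fun k => (Xs k).price c) atTop (nhds L) ∧ L < 0

/-- A robust uniformly strong arbitrage. -/
def RobustArbitrage {n : ℕ} (pay : Static n → Path n → ℝ) (c : Fin n → ℝ → ℝ)
    (P : Set (Path n)) : Prop :=
  ∃ (X : Static n) (D : Dyn n), D.Nonneg ∧ X.price c < 0 ∧
    ∀ ω ∈ P, 0 ≤ pay X ω + D.gains ω

/-- The superhedging price of `G` over semi-static strategies (no short selling). -/
def V {n : ℕ} (pay : Static n → Path n → ℝ) (c : Fin n → ℝ → ℝ)
    (P : Set (Path n)) (G : Path n → EReal) : EReal :=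
  sInf {q : EReal | ∃ (X : Static n) (D : Dyn n), D.Nonneg ∧ q = (X.price c : EReal) ∧
    ∀ ω ∈ P, G ω ≤ ((pay X ω + D.gains ω : ℝ) : EReal)}

/-- The superhedging price of `G` when the dynamic positions may take both signs. -/
def Vsigned {n : ℕ} (pay : Static n → Path n → ℝ) (c : Fin n → ℝ → ℝ)
    (P : Set (Path n)) (G : Path n → EReal) : EReal :=
  sInf {q : EReal | ∃ (X : Static n) (D : Dyn n), q = (X.price c : EReal) ∧
    ∀ ω ∈ P, G ω ≤ ((pay X ω + D.gains ω : ℝ) : EReal)}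

/-- `Π_μ`: probability measures on the path space with marginals `δ_{s₀}, μ₁, …, μ_n`. -/
def PiMu {n : ℕ} (s₀ : ℝ) (μ : Fin n → Measure ℝ) : Set (Measure (Path n)) :=
  {π | IsProbabilityMeasure π ∧ π (Omega n s₀) = 1 ∧
       ∀ i : Fin n, π.map (fun ω => ω i.succ) = μ i}

/-- The coordinate process is a supermartingale in its natural filtration:
for every Borel `A ⊆ ℝ₊^j`, `∫ 1_A(S₁,…,S_j)(S_{j+1} − S_j) dπ ≤ 0`. -/
def IsSupermartingaleLaw {n : ℕ} (π : Measure (Path n)) : Prop :=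
  ∀ (j : Fin n) (A : Set (Fin j → ℝ)), MeasurableSet A →
    ∫ ω, Set.indicator A (fun _ => (1 : ℝ)) (restr j ω) * (ω j.succ - ω j.castSucc) ∂π ≤ 0

/-- `M⁻_μ`: calibrated supermartingale measures. -/
def MSet {n : ℕ} (s₀ : ℝ) (μ : Fin n → Measure ℝ) : Set (Measure (Path n)) :=
  {π ∈ PiMu s₀ μ | IsSupermartingaleLaw π}

/-- `M⁻_{μ,𝔓}`: calibrated supermartingale measures giving full mass to `P`. -/
def MSetP {n : ℕ} (s₀ : ℝ) (μ : Fin n → Measure ℝ) (P : Set (Path n)) :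
    Set (Measure (Path n)) :=
  {π ∈ MSet s₀ μ | π P = 1}

/-- Assumption A on the marginals. -/
def AssumptionA {n : ℕ} (s₀ : ℝ) (μ : Fin n → Measure ℝ) : Prop :=
  (∀ i, ∫ x, x ∂(μ i) ≤ s₀) ∧
  (∀ i j : Fin n, i ≤ j → ∫ x, x ∂(μ j) ≤ ∫ x, x ∂(μ i)) ∧
  (∀ φ : ℝ → ℝ, ConcaveOn ℝ Set.univ φ → Monotone φ → (∀ x, 0 ≤ φ x) →
    ∀ i j : Fin n, i ≤ j → ∫ x, φ x ∂(μ j) ≤ ∫ x, φ x ∂(μ i))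

/-- Condition C (i): each `c_i` is nonnegative, convex and nonincreasing on `ℝ₊`. -/
def CondC1 {n : ℕ} (c : Fin n → ℝ → ℝ) : Prop :=
  ∀ i, (∀ x, 0 ≤ x → 0 ≤ c i x) ∧ ConvexOn ℝ (Set.Ici 0) (c i) ∧ AntitoneOn (c i) (Set.Ici 0)

/-- Condition C (ii): `s₀ ≥ c₁(0) ≥ … ≥ c_n(0) ≥ 0` and `c_i'(0+) ≥ −1`
(the latter expressed, for convex `c_i`, through the slopes at `0`). -/
def CondC2 {n : ℕ} (s₀ : ℝ) (c : Fin n → ℝ → ℝ) : Prop :=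
  (∀ i, c i 0 ≤ s₀) ∧ (∀ i j : Fin n, i ≤ j → c j 0 ≤ c i 0) ∧ (∀ i, 0 ≤ c i 0) ∧
    (∀ i, ∀ K : ℝ, 0 < K → c i 0 - K ≤ c i K)

/-- Condition C (iii): `c_i(K) → 0` as `K → ∞`. -/
def CondC3 {n : ℕ} (c : Fin n → ℝ → ℝ) : Prop :=
  ∀ i, Tendsto (c i) atTop (nhds 0)

/-- Condition C (iv): for every `x ≥ 0`, `c_i(0) − c_i(x)` is nonincreasing in `i`. -/
def CondC4 {n : ℕ} (c : Fin n → ℝ → ℝ) : Prop :=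
  ∀ x : ℝ, 0 ≤ x → ∀ i j : Fin n, i ≤ j → c j 0 - c j x ≤ c i 0 - c i x

/-- Condition C. -/
def CondC {n : ℕ} (s₀ : ℝ) (c : Fin n → ℝ → ℝ) : Prop :=
  CondC1 c ∧ CondC2 s₀ c ∧ CondC3 c ∧ CondC4 c

/-- Condition P (i). -/
def CondP1 {n : ℕ} (p : Fin n → ℝ → ℝ) : Prop :=
  ∀ i, (∀ x, 0 ≤ x → 0 ≤ p i x) ∧ ConvexOn ℝ (Set.Ici 0) (p i) ∧ MonotoneOn (p i) (Set.Ici 0)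

/-- Condition P (ii): `s₀ ≥ lim (x − p₁(x)) ≥ … ≥ 0` and `0 ≤ p_i'(0+) ≤ 1`. -/
def CondP2 {n : ℕ} (s₀ : ℝ) (p : Fin n → ℝ → ℝ) : Prop :=
  (∃ L : Fin n → ℝ,
    (∀ i, Tendsto (fun x => x - p i x) atTop (nhds (L i))) ∧
    (∀ i, L i ≤ s₀) ∧ (∀ i j : Fin n, i ≤ j → L j ≤ L i) ∧ (∀ i, 0 ≤ L i)) ∧
  (∃ d : Fin n → ℝ,
    (∀ i, Tendsto (fun K => (p i K - p i 0) / K) (nhdsWithin 0 (Set.Ioi 0)) (nhds (d i))) ∧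
    (∀ i, 0 ≤ d i ∧ d i ≤ 1))

/-- Condition P (iii): `p_i(K) → 0` as `K → 0` (within `ℝ₊`). -/
def CondP3 {n : ℕ} (p : Fin n → ℝ → ℝ) : Prop :=
  ∀ i, Tendsto (p i) (nhdsWithin 0 (Set.Ici 0)) (nhds 0)

/-- Condition P (iv): `p_i(x)` is nondecreasing in `i`. -/
def CondP4 {n : ℕ} (p : Fin n → ℝ → ℝ) : Prop :=
  ∀ x : ℝ, 0 ≤ x → ∀ i j : Fin n, i ≤ j → p i x ≤ p j x

/-- Condition P. -/
def CondP {n : ℕ} (s₀ : ℝ) (p : Fin n → ℝ → ℝ) : Prop :=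
  CondP1 p ∧ CondP2 s₀ p ∧ CondP3 p ∧ CondP4 p

/-- The measures `μ_i` defined from the put prices by `μ_i([0,K]) = p_i'(K)`;
equivalently, `p_i(K) = ∫ (K − x)⁺ μ_i(dx)`. -/
def PutPricesFrom {n : ℕ} (p : Fin n → ℝ → ℝ) (μ : Fin n → Measure ℝ) : Prop :=
  (∀ i, IsProbabilityMeasure (μ i)) ∧ (∀ i, μ i (Set.Iio 0) = 0) ∧
  (∀ i, Integrable (fun x => x) (μ i)) ∧
  (∀ i, ∀ K : ℝ, 0 ≤ K → p i K = ∫ x, max (K - x) 0 ∂(μ i))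

/-- The path `(s₀, s₁, …, s_i, x, s_{i+2}, …, s_n)`. -/
def mkPath {n : ℕ} (s₀ : ℝ) (i : Fin n) (s : Fin i → ℝ) (x : ℝ)
    (t : Fin (n - ((i : ℕ) + 1)) → ℝ) : Path n := fun j =>
  if h0 : (j : ℕ) = 0 then s₀
  else if h1 : (j : ℕ) ≤ (i : ℕ) then
    s ⟨(j : ℕ) - 1, by have := j.isLt; have := i.isLt; omega⟩
  else if h2 : (j : ℕ) = (i : ℕ) + 1 then x
  else t ⟨(j : ℕ) - (i : ℕ) - 2, by have := j.isLt; have := i.isLt; omega⟩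

/-- The family `β_i : ℝ₊^i → ℝ` defined recursively by `β_n = 0` and
`β_i(s₁,…,s_i) = (sup_{s_{i+2},…,s_n} limsup_{x→∞} ((β_{i+1}(s₁,…,s_i,x)
 + G(s₁,…,s_i,x,s_{i+2},…,s_n)/x)·1_𝔓)) ∨ 0`. -/
def IsBetaFamily {n : ℕ} (s₀ : ℝ) (P : Set (Path n)) (G : (Fin n → ℝ) → EReal)
    (β : (i : Fin (n + 1)) → (Fin i → ℝ) → ℝ) : Prop :=
  (∀ s, β (Fin.last n) s = 0) ∧
  ∀ (i : Fin n) (s : Fin i → ℝ), (∀ k, 0 ≤ s k) →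
    (β ⟨(i : ℕ), by have := i.isLt; omega⟩ s : EReal) =
      max 0 (⨆ (t : Fin (n - ((i : ℕ) + 1)) → ℝ) (_ : ∀ k, 0 ≤ t k),
        Filter.limsup (fun x : ℝ =>
          if mkPath s₀ i s x t ∈ P then
            ((β ⟨(i : ℕ) + 1, by have := i.isLt; omega⟩ (Fin.snoc s x) : ℝ) : EReal)
              + G (tailCoords (mkPath s₀ i s x t)) * ((x⁻¹ : ℝ) : EReal)
          else 0) Filter.atTop)

/-- Gains of the dynamic strategy `(β_i)`: `β₀(S₁ − s₀) + Σ_i β_i(S₁,…,S_i)(S_{i+1} − S_i)`. -/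
def gainsOf {n : ℕ} (β : (i : Fin (n + 1)) → (Fin i → ℝ) → ℝ) (ω : Path n) : ℝ :=
  ∑ j : Fin n, β ⟨(j : ℕ), by have := j.isLt; omega⟩ (restr j ω) * (ω j.succ - ω j.castSucc)

/-- The penalty function `λ_𝔓(s₁,…,s_n) = (1 + s₁ + … + s_n)·1{(s₁,…,s_n) ∉ 𝔓}`. -/
def lambdaP {n : ℕ} (P : Set (Path n)) (ω : Path n) : ℝ :=
  if ω ∈ P then 0 else 1 + ∑ i : Fin n, ω i.succ

/-- `min(s₀, s₁, …, s_m)`. -/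
def pmin {m : ℕ} (s₀ : ℝ) (s : Fin m → ℝ) : ℝ :=
  Finset.univ.inf' Finset.univ_nonempty
    (fun j : Fin (m + 1) =>
      if h : (j : ℕ) = 0 then s₀ else s ⟨(j : ℕ) - 1, by have := j.isLt; omega⟩)

/-- `max(s₀, s₁, …, s_m)`. -/
def pmax {m : ℕ} (s₀ : ℝ) (s : Fin m → ℝ) : ℝ :=
  Finset.univ.sup' Finset.univ_nonempty
    (fun j : Fin (m + 1) =>
      if h : (j : ℕ) = 0 then s₀ else s ⟨(j : ℕ) - 1, by have := j.isLt; omega⟩)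


lemma lintegral_le_liminf_of_lsc {E : Type*} [MeasurableSpace E] [TopologicalSpace E]
    [OpensMeasurableSpace E] [HasOuterApproxClosed E]
    {Q : ProbabilityMeasure E} {Qs : ℕ → ProbabilityMeasure E}
    (hlim : Tendsto Qs atTop (𝓝 Q)) {h : E → ℝ≥0∞} (hl : LowerSemicontinuous h) :
    ∫⁻ x, h x ∂(Q : Measure E) ≤ atTop.liminf (fun i => ∫⁻ x, h x ∂(Qs i : Measure E)) := by
  have hm : Measurable h := hl.measurable
  have hopen : ∀ (k : ℕ) (t : ℝ), 0 < t → IsOpen {x | t < (min (h x) k).toReal} := by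
    intro k t ht
    have hfin : ∀ x, min (h x) (k : ℝ≥0∞) ≠ ⊤ := fun x =>
      ne_top_of_le_ne_top (ENNReal.natCast_ne_top k) (min_le_right _ _)
    have : {x | t < (min (h x) k).toReal} =
        {x | ENNReal.ofReal t < h x ∧ ENNReal.ofReal t < (k : ℝ≥0∞)} := by
      ext x
      simp only [mem_ofPred_eq]
      rw [← ENNReal.ofReal_lt_iff_lt_toReal ht.le (hfin x), lt_min_iff]
    rw [this]
    by_cases hk : ENNReal.ofReal t < (k : ℝ≥0∞)
    · simp only [hk, and_true]
      exact hl.isOpen_preimage _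
    · simp [hk]
  have hk : ∀ k : ℕ, ∫⁻ x, min (h x) k ∂(Q : Measure E) ≤
      atTop.liminf (fun i => ∫⁻ x, h x ∂(Qs i : Measure E)) := by
    intro k
    have hfin : ∀ x, min (h x) (k : ℝ≥0∞) ≠ ⊤ := fun x =>
      ne_top_of_le_ne_top (ENNReal.natCast_ne_top k) (min_le_right _ _)
    have lc : ∀ R : Measure E, (∫⁻ x, min (h x) k ∂(R : Measure E)) =
        ∫⁻ t in Ioi (0 : ℝ), R {x | t < (min (h x) k).toReal} := by
      intro R
      rw [← lintegral_eq_lintegral_meas_lt R (Eventually.of_forall fun x => ENNReal.toReal_nonneg)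
        (hm.min measurable_const).ennreal_toReal.aemeasurable]
      exact lintegral_congr fun x => (ENNReal.ofReal_toReal (hfin x)).symm
    calc ∫⁻ x, min (h x) k ∂(Q : Measure E)
        = ∫⁻ t in Ioi (0 : ℝ), (Q : Measure E) {x | t < (min (h x) k).toReal} := lc _
      _ ≤ ∫⁻ t in Ioi (0 : ℝ), atTop.liminf
            (fun i => (Qs i : Measure E) {x | t < (min (h x) k).toReal}) := by
          refine setLIntegral_mono' measurableSet_Ioi fun t ht => ?_
          exact ProbabilityMeasure.le_liminf_measure_open_of_tendsto hlim (hopen k t ht)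
      _ ≤ atTop.liminf (fun i => ∫⁻ t in Ioi (0 : ℝ),
            (Qs i : Measure E) {x | t < (min (h x) k).toReal}) := by
          refine lintegral_liminf_le fun i => Antitone.measurable fun s t hst => ?_
          exact measure_mono fun x hx => lt_of_le_of_lt hst hx
      _ ≤ _ := by
          refine liminf_le_liminf (Eventually.of_forall fun i => ?_)
          rw [← lc]
          exact lintegral_mono fun x => min_le_left _ _
  have hs : ∀ x, h x = ⨆ k : ℕ, min (h x) k := by
    intro x
    have : (⨆ k : ℕ, min (h x) (k : ℝ≥0∞)) = min (h x) (⨆ k : ℕ, (k : ℝ≥0∞)) := by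
      exact (inf_iSup_eq _ _).symm
    rw [this, ENNReal.iSup_natCast]; simp
  calc ∫⁻ x, h x ∂(Q : Measure E) = ∫⁻ x, ⨆ k : ℕ, min (h x) k ∂(Q : Measure E) :=
        lintegral_congr hs
    _ = ⨆ k : ℕ, ∫⁻ x, min (h x) k ∂(Q : Measure E) := by
        refine lintegral_iSup (fun k => hm.min measurable_const) ?_
        intro i j hij x
        exact min_le_min le_rfl (by exact_mod_cast hij)
    _ ≤ _ := iSup_le hk

lemma isClosed_Omega (n : ℕ) (s₀ : ℝ) : IsClosed (Omega n s₀) := by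
  unfold Omega
  refine IsClosed.inter (isClosed_eq (continuous_apply 0) continuous_const) ?_
  have : {ω : Path n | ∀ i, 0 ≤ ω i} = ⋂ i, {ω | 0 ≤ ω i} := by ext; simp
  change IsClosed {ω : Path n | ∀ i, 0 ≤ ω i}
  rw [this]
  exact isClosed_iInter fun i => isClosed_le continuous_const (continuous_apply i)

lemma ae_Omega {n : ℕ} {s₀ : ℝ} {μ : Fin n → Measure ℝ} {Q : Measure (Path n)}
    (hQ : Q ∈ PiMu s₀ μ) : ∀ᵐ ω ∂Q, ω ∈ Omega n s₀ := by
  have := hQ.1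
  exact (mem_ae_iff_prob_eq_one (isClosed_Omega n s₀).measurableSet).2 hQ.2.1

lemma tight_PiMu {n : ℕ} {s₀ : ℝ} {μ : Fin n → Measure ℝ} (hprob : ∀ i, IsProbabilityMeasure (μ i)) :
    IsTightMeasureSet (PiMu s₀ μ) := by
  rw [isTightMeasureSet_iff_exists_isCompact_measure_compl_le]
  intro ε hε
  have hc : ∀ i : Fin n, ∃ C : Set ℝ, IsCompact C ∧ μ i Cᶜ ≤ ε / (n + 1 : ℕ) := by
    intro i
    have := isTightMeasureSet_singleton (μ := μ i)
    rw [isTightMeasureSet_iff_exists_isCompact_measure_compl_le] at this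
    obtain ⟨C, hC, h⟩ := this (ε / (n + 1 : ℕ)) (ENNReal.div_pos hε.ne' (ENNReal.natCast_ne_top _))
    exact ⟨C, hC, h _ rfl⟩
  choose C hC hCm using hc
  refine ⟨Set.pi univ (Fin.cases {s₀} C), isCompact_univ_pi ?_, ?_⟩
  · intro i
    refine Fin.cases ?_ (fun i => ?_) i
    · exact isCompact_singleton
    · exact hC i
  intro Q hQ
  have h0 : Q (Omega n s₀)ᶜ = 0 := ae_Omega hQ
  have hsub : (Set.pi univ (Fin.cases {s₀} C : Fin (n+1) → Set ℝ))ᶜ ⊆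
      (Omega n s₀)ᶜ ∪ ⋃ i : Fin n, (fun ω : Path n => ω i.succ) ⁻¹' (C i)ᶜ := by
    intro ω hω
    by_contra hcon
    simp only [mem_union, not_or, mem_compl_iff, not_not, mem_iUnion, mem_preimage, not_exists] at hcon
    apply hω
    intro i _
    refine Fin.cases ?_ (fun i => ?_) i
    · exact hcon.1.1
    · exact hcon.2 i
  calc Q _ ≤ Q ((Omega n s₀)ᶜ ∪ ⋃ i : Fin n, (fun ω : Path n => ω i.succ) ⁻¹' (C i)ᶜ) :=
        measure_mono hsub
    _ ≤ Q (Omega n s₀)ᶜ + ∑ i : Fin n, Q ((fun ω : Path n => ω i.succ) ⁻¹' (C i)ᶜ) :=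
        (measure_union_le _ _).trans (add_le_add le_rfl (measure_iUnion_fintype_le _ _))
    _ ≤ 0 + ∑ i : Fin n, ε / (n + 1 : ℕ) := by
        refine add_le_add h0.le (Finset.sum_le_sum fun i _ => ?_)
        have h1 := Measure.map_apply (μ := Q) (f := fun ω : Path n => ω i.succ)
          (measurable_pi_apply _) (hC i).measurableSet.compl
        rw [← h1, hQ.2.2 i]
        exact hCm i
    _ ≤ ε := by
        simp only [zero_add, Finset.sum_const, Finset.card_univ, Fintype.card_fin, nsmul_eq_mul]
        calc (n : ℝ≥0∞) * (ε / (n + 1 : ℕ)) ≤ ((n + 1 : ℕ) : ℝ≥0∞) * (ε / (n + 1 : ℕ)) := by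
              gcongr; omega
          _ ≤ ε := ENNReal.mul_div_le

lemma exists_subseq {n : ℕ} {s₀ : ℝ} {μ : Fin n → Measure ℝ} (hprob : ∀ i, IsProbabilityMeasure (μ i))
    (Qs : ℕ → ProbabilityMeasure (Path n)) (h : ∀ k, (Qs k : Measure (Path n)) ∈ PiMu s₀ μ) :
    ∃ (Q : ProbabilityMeasure (Path n)) (φ : ℕ → ℕ), StrictMono φ ∧ Tendsto (Qs ∘ φ) atTop (𝓝 Q) := by
  have hc : IsCompact (closure {Q : ProbabilityMeasure (Path n) | (Q : Measure (Path n)) ∈ PiMu s₀ μ}) := by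
    apply isCompact_closure_of_isTightMeasureSet
    refine (tight_PiMu (s₀ := s₀) (μ := μ) hprob).subset ?_
    rintro _ ⟨Q, hQ, rfl⟩
    exact hQ
  obtain ⟨Q, _, φ, hφ, hl⟩ := hc.tendsto_subseq (fun k => subset_closure (h k))
  exact ⟨Q, φ, hφ, hl⟩

lemma lintegral_coord {n : ℕ} {s₀ : ℝ} {μ : Fin n → Measure ℝ} {Q : Measure (Path n)}
    (hQ : Q ∈ PiMu s₀ μ) (i : Fin (n + 1)) :
    ∫⁻ ω, ENNReal.ofReal (ω i) ∂(Q : Measure (Path n)) =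
      (Fin.cases (ENNReal.ofReal s₀) (fun i => ∫⁻ x, ENNReal.ofReal x ∂(μ i)) i : ℝ≥0∞) := by
  have := hQ.1
  refine Fin.cases ?_ (fun i => ?_) i
  · have : ∫⁻ ω, ENNReal.ofReal (ω 0) ∂(Q : Measure (Path n)) =
        ∫⁻ ω, ENNReal.ofReal s₀ ∂(Q : Measure (Path n)) := by
      apply lintegral_congr_ae
      filter_upwards [ae_Omega hQ] with ω hω
      rw [hω.1]
    rw [this]; simp
  · simp only [Fin.cases_succ]
    rw [← hQ.2.2 i, lintegral_map ENNReal.measurable_ofReal (measurable_pi_apply _)]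

lemma lintegral_coord_ne_top {n : ℕ} {s₀ : ℝ} {μ : Fin n → Measure ℝ} {Q : Measure (Path n)}
    (hmom : ∀ i, Integrable (fun x => x) (μ i))
    (hQ : Q ∈ PiMu s₀ μ) (i : Fin (n + 1)) :
    ∫⁻ ω, ENNReal.ofReal (ω i) ∂(Q : Measure (Path n)) ≠ ⊤ := by
  rw [lintegral_coord hQ]
  refine Fin.cases ?_ (fun i => ?_) i
  · simp
  · exact (hmom i).lintegral_lt_top.ne

lemma measurable_restr {n : ℕ} (j : Fin n) : Measurable (restr j : Path n → Fin j → ℝ) :=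
  measurable_pi_lambda _ fun _ => measurable_pi_apply _

lemma continuous_restr {n : ℕ} (j : Fin n) : Continuous (restr j : Path n → Fin j → ℝ) :=
  continuous_pi fun _ => continuous_apply _

/-- The image under `restr j` of the measure with density `S_i`. -/
def nu {n : ℕ} (Q : Measure (Path n)) (j : Fin n) (i : Fin (n + 1)) : Measure (Fin j → ℝ) :=
  (Q.withDensity (fun ω => ENNReal.ofReal (ω i))).map (restr j)

lemma lintegral_nu {n : ℕ} (Q : Measure (Path n)) (j : Fin n) (i : Fin (n + 1))
    {φ : (Fin j → ℝ) → ℝ≥0∞} (hφ : Measurable φ) :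
    ∫⁻ x, φ x ∂(nu Q j i) =
      ∫⁻ ω, ENNReal.ofReal (ω i) * φ (restr j ω) ∂(Q : Measure (Path n)) := by
  unfold nu
  rw [lintegral_map hφ (measurable_restr j)]
  exact lintegral_withDensity_eq_lintegral_mul _ (by fun_prop) (hφ.comp (measurable_restr j))

lemma nu_apply {n : ℕ} (Q : Measure (Path n)) (j : Fin n) (i : Fin (n + 1))
    {A : Set (Fin j → ℝ)} (hA : MeasurableSet A) :
    nu Q j i A = ∫⁻ ω, ENNReal.ofReal (A.indicator (fun _ => (1 : ℝ)) (restr j ω) * ω i)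
      ∂(Q : Measure (Path n)) := by
  rw [← lintegral_indicator_one hA, lintegral_nu Q j i (measurable_one.indicator hA)]
  refine lintegral_congr fun ω => ?_
  by_cases h : restr j ω ∈ A <;> simp [h]

lemma nu_finite {n : ℕ} {s₀ : ℝ} {μ : Fin n → Measure ℝ} {Q : Measure (Path n)}
    (hmom : ∀ i, Integrable (fun x => x) (μ i))
    (hQ : Q ∈ PiMu s₀ μ) (j : Fin n) (i : Fin (n + 1)) : IsFiniteMeasure (nu Q j i) := by
  have : IsFiniteMeasure (Q.withDensity (fun ω => ENNReal.ofReal (ω i))) :=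
    isFiniteMeasure_withDensity (lintegral_coord_ne_top hmom hQ i)
  unfold nu
  infer_instance

lemma super_iff {n : ℕ} {s₀ : ℝ} {μ : Fin n → Measure ℝ} {Q : Measure (Path n)}
    (hmom : ∀ i, Integrable (fun x => x) (μ i)) (hQ : Q ∈ PiMu s₀ μ) :
    IsSupermartingaleLaw Q ↔ ∀ j : Fin n, nu Q j j.succ ≤ nu Q j j.castSucc := by
  unfold IsSupermartingaleLaw
  refine forall_congr' fun j => ?_
  rw [Measure.le_iff]
  refine forall_congr' fun A => ?_
  refine forall_congr' fun hA => ?_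
  have hmeas : ∀ i : Fin (n + 1), Measurable
      (fun ω : Path n => A.indicator (fun _ => (1 : ℝ)) (restr j ω) * ω i) := fun i =>
    ((measurable_const.indicator hA).comp (measurable_restr j)).mul (measurable_pi_apply i)
  have hnn : ∀ i : Fin (n + 1), 0 ≤ᵐ[Q]
      (fun ω : Path n => A.indicator (fun _ => (1 : ℝ)) (restr j ω) * ω i) := by
    intro i
    filter_upwards [ae_Omega hQ] with ω hω
    exact mul_nonneg (indicator_nonneg (fun _ _ => zero_le_one) _) (hω.2 i)
  have hfin : ∀ i, nu Q j i A ≠ ⊤ := fun i => by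
    have := nu_finite hmom hQ j i
    exact measure_ne_top _ _
  have hint : ∀ i : Fin (n + 1), Integrable
      (fun ω : Path n => A.indicator (fun _ => (1 : ℝ)) (restr j ω) * ω i) Q := by
    intro i
    refine (lintegral_ofReal_ne_top_iff_integrable (hmeas i).aestronglyMeasurable (hnn i)).1 ?_
    rw [← nu_apply Q j i hA]
    exact hfin i
  have heq : ∀ i : Fin (n + 1), ∫ ω, A.indicator (fun _ => (1 : ℝ)) (restr j ω) * ω i
      ∂(Q : Measure (Path n)) = (nu Q j i A).toReal := by
    intro i
    rw [nu_apply Q j i hA,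
      integral_eq_lintegral_of_nonneg_ae (hnn i) (hmeas i).aestronglyMeasurable]
  simp only [mul_sub]
  rw [integral_sub (hint _) (hint _), heq, heq, sub_nonpos,
    ENNReal.toReal_le_toReal (hfin _) (hfin _)]

lemma PiMu_limit {n : ℕ} {s₀ : ℝ} {μ : Fin n → Measure ℝ} (hprob : ∀ i, IsProbabilityMeasure (μ i))
    {Q : ProbabilityMeasure (Path n)} {Qs : ℕ → ProbabilityMeasure (Path n)}
    (hQs : ∀ k, (Qs k : Measure (Path n)) ∈ PiMu s₀ μ) (hlim : Tendsto Qs atTop (𝓝 Q)) :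
    (Q : Measure (Path n)) ∈ PiMu s₀ μ := by
  refine ⟨inferInstance, le_antisymm prob_le_one ?_, fun i => ?_⟩
  · have := ProbabilityMeasure.limsup_measure_closed_le_of_tendsto hlim (isClosed_Omega n s₀)
    simpa [fun k => (hQs k).2.1] using this
  · have hc : Continuous (fun ω : Path n => ω i.succ) := continuous_apply _
    have h1 := ProbabilityMeasure.tendsto_map_of_tendsto_of_continuous Qs Q hlim hc
    have h2 : ∀ k, (Qs k).map hc.measurable.aemeasurable = (⟨μ i, hprob i⟩ : ProbabilityMeasure ℝ) :=
      fun k => Subtype.ext ((hQs k).2.2 i)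
    simp only [h2] at h1
    have h3 := tendsto_nhds_unique tendsto_const_nhds h1
    exact (congrArg (fun R : ProbabilityMeasure ℝ => (R : Measure ℝ)) h3).symm

lemma MSet_limit {n : ℕ} {s₀ : ℝ} {μ : Fin n → Measure ℝ} (hprob : ∀ i, IsProbabilityMeasure (μ i))
    (hmom : ∀ i, Integrable (fun x => x) (μ i))
    {Q : ProbabilityMeasure (Path n)} {Qs : ℕ → ProbabilityMeasure (Path n)}
    (hQs : ∀ k, (Qs k : Measure (Path n)) ∈ MSet s₀ μ) (hlim : Tendsto Qs atTop (𝓝 Q)) :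
    (Q : Measure (Path n)) ∈ MSet s₀ μ := by
  have hQ : (Q : Measure (Path n)) ∈ PiMu s₀ μ := PiMu_limit hprob (fun k => (hQs k).1) hlim
  refine ⟨hQ, (super_iff hmom hQ).2 fun j => ?_⟩
  have hf1 := nu_finite hmom hQ j j.succ
  have hf2 := nu_finite hmom hQ j j.castSucc
  -- the inequality against continuous functions with values in [0,1]
  have key : ∀ φ : (Fin j → ℝ) → ℝ≥0∞, Continuous φ → (∀ x, φ x ≤ 1) →
      ∫⁻ x, φ x ∂(nu Q j j.succ) ≤ ∫⁻ x, φ x ∂(nu Q j j.castSucc) := by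
    intro φ hφ hφ1
    have hφm := hφ.measurable
    have hψ : Continuous (fun x => 1 - φ x) :=
      (ENNReal.continuous_sub_left ENNReal.one_ne_top).comp hφ
    have hadd : ∀ R : Measure (Path n),
        ∫⁻ x, φ x ∂(nu R j j.castSucc) + ∫⁻ x, (1 - φ x) ∂(nu R j j.castSucc) =
        ∫⁻ ω, ENNReal.ofReal (ω j.castSucc) ∂(R : Measure (Path n)) := by
      intro R
      rw [← lintegral_add_left hφm, lintegral_nu _ _ _ (φ := fun x => φ x + (1 - φ x))
        (hφm.add hψ.measurable)]
      refine lintegral_congr fun ω => ?_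
      rw [add_tsub_cancel_of_le (hφ1 _), mul_one]
    have hcc : ∀ i : Fin (n + 1), Continuous (fun ω : Path n => ENNReal.ofReal (ω i)) := fun i =>
      ENNReal.continuous_ofReal.comp (continuous_apply i)
    have hl : ∀ (i : Fin (n + 1)) (χ : (Fin j → ℝ) → ℝ≥0∞), Continuous χ → (∀ x, χ x ≤ 1) →
        Continuous (fun ω : Path n => ENNReal.ofReal (ω i) * χ (restr j ω)) := by
      intro i χ hχ hχ1
      rw [continuous_iff_continuousAt]
      intro ω
      exact ENNReal.Tendsto.mul (hcc i).continuousAt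
        (Or.inr (ne_top_of_le_ne_top ENNReal.one_ne_top (hχ1 _)))
        (hχ.comp (continuous_restr j)).continuousAt (Or.inr ENNReal.ofReal_ne_top)
    have hlsc := ((hl j.succ φ hφ hφ1).add
      (hl j.castSucc (fun x => 1 - φ x) hψ (fun x => tsub_le_self))).lowerSemicontinuous
    have hlim' := lintegral_le_liminf_of_lsc hlim hlsc
    have hsum : ∀ R : Measure (Path n), ∫⁻ ω, (ENNReal.ofReal (ω j.succ) * φ (restr j ω) +
        ENNReal.ofReal (ω j.castSucc) * (1 - φ (restr j ω))) ∂(R : Measure (Path n)) =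
        ∫⁻ x, φ x ∂(nu R j j.succ) + ∫⁻ x, (1 - φ x) ∂(nu R j j.castSucc) := by
      intro R
      rw [lintegral_add_left (hl j.succ φ hφ hφ1).measurable, lintegral_nu _ _ _ hφm,
        lintegral_nu _ _ _ hψ.measurable]
    have hle : ∀ k, ∫⁻ ω, (ENNReal.ofReal (ω j.succ) * φ (restr j ω) +
        ENNReal.ofReal (ω j.castSucc) * (1 - φ (restr j ω))) ∂(Qs k : Measure (Path n)) ≤
        ∫⁻ ω, ENNReal.ofReal (ω j.castSucc) ∂(Q : Measure (Path n)) := by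
      intro k
      rw [hsum, lintegral_coord hQ, ← lintegral_coord (hQs k).1, ← hadd]
      refine add_le_add (lintegral_mono' ?_ le_rfl) le_rfl
      exact (super_iff hmom (hQs k).1).1 (hQs k).2 j
    have h1 := hlim'.trans (liminf_le_of_frequently_le' (Frequently.of_forall hle))
    simp only [Pi.add_apply] at h1
    rw [hsum, ← hadd] at h1
    refine (ENNReal.add_le_add_iff_right ?_).1 h1
    refine ne_top_of_le_ne_top ?_ (le_add_self.trans (hadd Q).le)
    exact lintegral_coord_ne_top hmom hQ _
  have hclosed : ∀ F : Set (Fin j → ℝ), IsClosed F → nu Q j j.succ F ≤ nu Q j j.castSucc F := by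
    intro F hF
    have hpos : ∀ m : ℕ, (0 : ℝ) < 1 / ((m : ℝ) + 1) := fun m => by positivity
    have t1 := tendsto_lintegral_thickenedIndicator_of_isClosed (nu Q j j.succ) hF hpos
      tendsto_one_div_add_atTop_nhds_zero_nat
    have t2 := tendsto_lintegral_thickenedIndicator_of_isClosed (nu Q j j.castSucc) hF hpos
      tendsto_one_div_add_atTop_nhds_zero_nat
    refine le_of_tendsto_of_tendsto' t1 t2 fun m => key _ ?_ fun x => ?_
    · exact ENNReal.continuous_coe.comp (thickenedIndicator (hpos m) F).continuous
    · exact_mod_cast thickenedIndicator_le_one (hpos m) F x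
  rw [Measure.le_iff]
  intro A hA
  rw [hA.measure_eq_iSup_isClosed_of_ne_top (measure_ne_top _ _)]
  exact iSup_le fun F => iSup_le fun hFA => iSup_le fun hF =>
    (hclosed F hF).trans (measure_mono hFA)

/-- The weight `1 + s₁ + … + s_n`. -/
def wgt {n : ℕ} (ω : Path n) : ℝ := 1 + ∑ i : Fin n, ω i.succ

lemma continuous_wgt {n : ℕ} : Continuous (wgt : Path n → ℝ) := by
  unfold wgt
  fun_prop

lemma wgt_nonneg {n : ℕ} {s₀ : ℝ} {ω : Path n} (h : ω ∈ Omega n s₀) : 1 ≤ wgt ω := by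
  unfold wgt
  have : 0 ≤ ∑ i : Fin n, ω i.succ := Finset.sum_nonneg fun i _ => h.2 _
  linarith

/-- The penalty as an `ℝ≥0∞`-valued function. -/
def lamE {n : ℕ} (P : Set (Path n)) (ω : Path n) : ℝ≥0∞ :=
  if ω ∈ P then 0 else ENNReal.ofReal (wgt ω)

/-- The gap `K w - G`, extended by `⊤` outside `Ω`. -/
def gapE {n : ℕ} (s₀ K : ℝ) (G : (Fin n → ℝ) → EReal) (ω : Path n) : ℝ≥0∞ :=
  if ω ∈ Omega n s₀ then (((K * wgt ω : ℝ) : EReal) - G (tailCoords ω)).toENNReal else ⊤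

lemma lsc_lamE {n : ℕ} {P : Set (Path n)} (hP : IsClosed P) : LowerSemicontinuous (lamE P) := by
  intro ω y hy
  by_cases h : ω ∈ P
  · simp [lamE, h] at hy
  · have h1 : ∀ᶠ ω' in 𝓝 ω, ω' ∉ P := hP.isOpen_compl.mem_nhds h
    have h2 : ∀ᶠ ω' in 𝓝 ω, y < ENNReal.ofReal (wgt ω') := by
      have : Continuous (fun ω' : Path n => ENNReal.ofReal (wgt ω')) :=
        ENNReal.continuous_ofReal.comp continuous_wgt
      refine this.continuousAt.eventually (lt_mem_nhds ?_)
      simpa [lamE, h] using hy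
    filter_upwards [h1, h2] with ω' h1 h2
    simpa [lamE, h1] using h2

lemma lt_toENNReal_iff (y : ℝ≥0∞) (x : EReal) : y < x.toENNReal ↔ (y : EReal) < x := by
  rw [← EReal.coe_ennreal_lt_coe_ennreal_iff]
  rcases le_total 0 x with h | h
  · rw [EReal.coe_toENNReal h]
  · rw [EReal.toENNReal_of_nonpos h]
    have : (0 : EReal) ≤ (y : EReal) := EReal.coe_ennreal_nonneg y
    simp only [EReal.coe_ennreal_zero]
    exact ⟨fun hh => absurd hh (not_lt.2 this), fun hh => absurd (hh.trans_le h) (not_lt.2 this)⟩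

lemma lsc_gapE {n : ℕ} {s₀ K : ℝ} {G : (Fin n → ℝ) → EReal} (hGtop : ∀ s, G s ≠ ⊤)
    (hGusc : UpperSemicontinuousOn G {s | ∀ i, 0 ≤ s i}) :
    LowerSemicontinuous (gapE s₀ K G) := by
  intro ω y hy
  by_cases h : ω ∈ Omega n s₀
  · simp only [gapE, h, if_true, lt_toENNReal_iff] at hy
    have hyt : y ≠ ⊤ := by
      rintro rfl
      simp at hy
    lift y to ℝ≥0 using hyt
    have hlt : G (tailCoords ω) < ((K * wgt ω - y : ℝ) : EReal) := by
      have hh := hGtop (tailCoords ω)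
      generalize G (tailCoords ω) = z at hy hh
      induction z using EReal.rec with
      | bot => exact EReal.bot_lt_coe _
      | top => exact absurd rfl hh
      | coe z =>
        have hy' : (y : ℝ) < K * wgt ω - z := by
          rwa [EReal.coe_nnreal_eq_coe_real, ← EReal.coe_sub, EReal.coe_lt_coe_iff] at hy
        have : z < K * wgt ω - y := by linarith
        exact_mod_cast this
    obtain ⟨a, ha1, ha2⟩ := EReal.lt_iff_exists_real_btwn.1 hlt
    have ha3 : a < K * wgt ω - y := by exact_mod_cast ha2
    have h1 : ∀ᶠ ω' in 𝓝 ω, a < K * wgt ω' - y := by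
      have : Continuous (fun ω' : Path n => K * wgt ω' - (y : ℝ)) :=
        (continuous_const.mul continuous_wgt).sub continuous_const
      exact this.continuousAt.eventually (lt_mem_nhds ha3)
    have h2 : ∀ᶠ ω' in 𝓝 ω, ω' ∈ Omega n s₀ → G (tailCoords ω') < a := by
      have hu := hGusc (tailCoords ω) (fun i => h.2 _) a ha1
      rw [eventually_nhdsWithin_iff] at hu
      have hc : Continuous (tailCoords : Path n → Fin n → ℝ) :=
        continuous_pi fun i => continuous_apply _
      filter_upwards [hc.continuousAt.eventually hu] with ω' h1 h2
      exact h1 fun i => h2.2 _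
    filter_upwards [h1, h2] with ω' h1 h2
    by_cases h' : ω' ∈ Omega n s₀
    · simp only [gapE, h', if_true, lt_toENNReal_iff]
      have h2 := h2 h'
      generalize G (tailCoords ω') = z at h2
      induction z using EReal.rec with
      | bot => exact EReal.coe_lt_top _
      | top => exact absurd h2 (by simp)
      | coe z =>
        have h2' : z < a := by exact_mod_cast h2
        have : (y : ℝ) < K * wgt ω' - z := by linarith
        rwa [EReal.coe_nnreal_eq_coe_real, ← EReal.coe_sub, EReal.coe_lt_coe_iff]
    · simp [gapE, h']
  · have h1 : ∀ᶠ ω' in 𝓝 ω, ω' ∉ Omega n s₀ := (isClosed_Omega n s₀).isOpen_compl.mem_nhds h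
    filter_upwards [h1] with ω' h1
    simp only [gapE, h, if_false] at hy
    simpa [gapE, h1] using hy

lemma posE_coe (r : ℝ) : posE (r : EReal) = ENNReal.ofReal r := by simp [posE]

lemma eexpE_eq {n : ℕ} {Q : Measure (Path n)} {f : Path n → EReal} {g : Path n → ℝ}
    {h : Path n → ℝ≥0∞} (hg : Measurable g) (hh : Measurable h)
    (hae : ∀ᵐ ω ∂Q, f ω ≤ (g ω : EReal) ∧ 0 ≤ g ω ∧ h ω = ((g ω : EReal) - f ω).toENNReal)
    (hfin : ∫⁻ ω, ENNReal.ofReal (g ω) ∂(Q : Measure (Path n)) ≠ ⊤) :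
    eexpE Q f = ((∫⁻ ω, ENNReal.ofReal (g ω) ∂(Q : Measure (Path n)) : ℝ≥0∞) : EReal) -
      ((∫⁻ ω, h ω ∂(Q : Measure (Path n)) : ℝ≥0∞) : EReal) := by
  have hgm : Measurable (fun ω => ENNReal.ofReal (g ω)) := hg.ennreal_ofReal
  have hA : ∫⁻ ω, posE (f ω) ∂(Q : Measure (Path n)) =
      ∫⁻ ω, (ENNReal.ofReal (g ω) - h ω) ∂(Q : Measure (Path n)) := by
    apply lintegral_congr_ae
    filter_upwards [hae] with ω ⟨h1, h2, h3⟩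
    rw [h3]
    generalize f ω = z at h1
    induction z using EReal.rec with
    | bot => simp [posE]
    | top => exact absurd h1 (by simp)
    | coe z =>
      have h1' : z ≤ g ω := by exact_mod_cast h1
      rw [posE_coe, ← EReal.coe_sub, EReal.toENNReal_of_ne_top (EReal.coe_ne_top _),
        EReal.toReal_coe, ← ENNReal.ofReal_sub _ (by linarith)]
      congr 1; ring
  have hB : ∫⁻ ω, posE (f ω) ∂(Q : Measure (Path n)) + ∫⁻ ω, h ω ∂(Q : Measure (Path n)) =
      ∫⁻ ω, ENNReal.ofReal (g ω) ∂(Q : Measure (Path n)) +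
        ∫⁻ ω, posE (-(f ω)) ∂(Q : Measure (Path n)) := by
    rw [hA, ← lintegral_add_right _ hh, ← lintegral_add_left hgm]
    apply lintegral_congr_ae
    filter_upwards [hae] with ω ⟨h1, h2, h3⟩
    rw [h3]
    generalize f ω = z at h1
    induction z using EReal.rec with
    | bot => simp [posE]
    | top => exact absurd h1 (by simp)
    | coe z =>
      have h1' : z ≤ g ω := by exact_mod_cast h1
      rw [← EReal.coe_neg, posE_coe, ← EReal.coe_sub,
        EReal.toENNReal_of_ne_top (EReal.coe_ne_top _),
        EReal.toReal_coe, ← ENNReal.ofReal_sub _ (by linarith)]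
      rcases le_total 0 z with hz | hz
      · rw [ENNReal.ofReal_of_nonpos (by linarith : -z ≤ 0), ← ENNReal.ofReal_add (by linarith)
          (by linarith)]
        simp
      · rw [ENNReal.ofReal_of_nonpos (by linarith : g ω - (g ω - z) ≤ 0),
          ← ENNReal.ofReal_add (by linarith) (by linarith), zero_add]
        congr 1
  have hAfin : ∫⁻ ω, posE (f ω) ∂(Q : Measure (Path n)) ≠ ⊤ := by
    rw [hA]
    exact ne_top_of_le_ne_top hfin (lintegral_mono fun ω => tsub_le_self)
  unfold eexpE
  generalize ∫⁻ ω, posE (f ω) ∂(Q : Measure (Path n)) = a at *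
  generalize ∫⁻ ω, h ω ∂(Q : Measure (Path n)) = b at *
  generalize ∫⁻ ω, ENNReal.ofReal (g ω) ∂(Q : Measure (Path n)) = c at *
  generalize ∫⁻ ω, posE (-(f ω)) ∂(Q : Measure (Path n)) = d at *
  lift a to ℝ≥0 using hAfin
  lift c to ℝ≥0 using hfin
  by_cases hb : b = ⊤
  · subst hb
    have : d = ⊤ := by
      by_contra hd
      lift d to ℝ≥0 using hd
      simp at hB
      exact absurd hB.symm (by exact_mod_cast ENNReal.coe_ne_top)
    subst this
    simp [EReal.coe_ennreal_top, sub_eq_add_neg]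
  · lift b to ℝ≥0 using hb
    have hd : d ≠ ⊤ := by
      rintro rfl
      simp at hB
    lift d to ℝ≥0 using hd
    have hB' : a + b = c + d := by exact_mod_cast hB
    have hB'' : (a : ℝ) + b = c + d := by exact_mod_cast hB'
    have : (a : ℝ) - d = c - b := by linarith
    simp only [EReal.coe_nnreal_eq_coe_real]
    exact_mod_cast this

lemma eexpE_pen {n : ℕ} {s₀ : ℝ} {μ : Fin n → Measure ℝ} {Q : Measure (Path n)}
    (hmom : ∀ i, Integrable (fun x => x) (μ i)) (hQ : Q ∈ PiMu s₀ μ)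
    {P : Set (Path n)} (hPclosed : IsClosed P)
    {G : (Fin n → ℝ) → EReal} (hGtop : ∀ s, G s ≠ ⊤)
    (hGusc : UpperSemicontinuousOn G {s | ∀ i, 0 ≤ s i})
    {K : ℝ} (hK : 0 ≤ K)
    (hG : ∀ s : Fin n → ℝ, (∀ i, 0 ≤ s i) → G s ≤ ((K * (1 + ∑ i, s i) : ℝ) : EReal))
    {I : ℝ≥0∞} (hI : I ≠ ⊤)
    (hIeq : ∫⁻ ω, ENNReal.ofReal (K * wgt ω) ∂(Q : Measure (Path n)) = I) (N : ℕ) :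
    eexpE Q (fun ω => G (tailCoords ω) - (((N : ℝ) * lambdaP P ω : ℝ) : EReal)) =
      (I : EReal) - ((∫⁻ ω, (gapE s₀ K G ω + N * lamE P ω) ∂(Q : Measure (Path n)) : ℝ≥0∞) :
        EReal) := by
  rw [← hIeq]
  refine eexpE_eq (continuous_const.mul continuous_wgt).measurable
    ((lsc_gapE hGtop hGusc).measurable.add ((lsc_lamE hPclosed).measurable.const_mul _)) ?_
    (by rw [hIeq]; exact hI)
  filter_upwards [ae_Omega hQ] with ω hω
  have hw := wgt_nonneg hω
  have hGω : G (tailCoords ω) ≤ ((K * wgt ω : ℝ) : EReal) := hG _ (fun i => hω.2 _)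
  have hl : 0 ≤ lambdaP P ω := by
    unfold lambdaP
    split_ifs
    · exact le_rfl
    · exact le_trans zero_le_one hw
  have hl2 : lamE P ω = ENNReal.ofReal (lambdaP P ω) := by
    unfold lambdaP lamE
    split_ifs
    · simp
    · rfl
  have hNl : 0 ≤ (N : ℝ) * lambdaP P ω := by positivity
  have hKw : 0 ≤ K * wgt ω := mul_nonneg hK (by linarith)
  simp only [gapE, hω, if_true, hl2]
  generalize G (tailCoords ω) = z at hGω
  induction z using EReal.rec with
  | bot => exact ⟨by simp [sub_eq_add_neg], hKw, by
      generalize K * wgt ω = q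
      simp [sub_eq_add_neg]⟩
  | top => exact absurd (top_le_iff.1 hGω) (EReal.coe_ne_top _)
  | coe z =>
    have h1' : z ≤ K * wgt ω := by exact_mod_cast hGω
    refine ⟨?_, hKw, ?_⟩
    · have : z - N * lambdaP P ω ≤ K * wgt ω := by linarith
      exact_mod_cast this
    · rw [← EReal.coe_sub, ← EReal.coe_sub, ← EReal.coe_sub,
        EReal.toENNReal_of_ne_top (EReal.coe_ne_top _),
        EReal.toENNReal_of_ne_top (EReal.coe_ne_top _), EReal.toReal_coe, EReal.toReal_coe,
        ← ENNReal.ofReal_natCast, ← ENNReal.ofReal_mul (by positivity),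
        ← ENNReal.ofReal_add (by linarith) hNl]
      congr 1; ring

lemma exists_const {n : ℕ} {s₀ : ℝ} {μ : Fin n → Measure ℝ}
    (hmom : ∀ i, Integrable (fun x => x) (μ i)) {K : ℝ} (hK : 0 ≤ K) :
    ∃ I : ℝ≥0∞, I ≠ ⊤ ∧ ∀ Q ∈ PiMu s₀ μ,
      ∫⁻ ω, ENNReal.ofReal (K * wgt ω) ∂(Q : Measure (Path n)) = I := by
  refine ⟨ENNReal.ofReal K * (1 + ∑ i : Fin n, ∫⁻ x, ENNReal.ofReal x ∂(μ i)), ?_, ?_⟩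
  · refine ENNReal.mul_ne_top ENNReal.ofReal_ne_top (ENNReal.add_ne_top.2 ⟨ENNReal.one_ne_top, ?_⟩)
    exact (ENNReal.sum_lt_top.2 fun i _ => (hmom i).lintegral_lt_top).ne
  · intro Q hQ
    have := hQ.1
    have h1 : ∫⁻ ω, ENNReal.ofReal (K * wgt ω) ∂(Q : Measure (Path n)) =
        ∫⁻ ω, ENNReal.ofReal K * (1 + ∑ i : Fin n, ENNReal.ofReal (ω i.succ))
          ∂(Q : Measure (Path n)) := by
      apply lintegral_congr_ae
      filter_upwards [ae_Omega hQ] with ω hω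
      unfold wgt
      rw [ENNReal.ofReal_mul hK, ENNReal.ofReal_add zero_le_one
        (Finset.sum_nonneg fun i _ => hω.2 _), ENNReal.ofReal_sum_of_nonneg fun i _ => hω.2 _]
      simp
    rw [h1, lintegral_const_mul _ (by fun_prop), lintegral_add_left measurable_const,
      lintegral_finsetSum _ (by fun_prop)]
    congr 2
    · simp
    · exact Finset.sum_congr rfl fun i _ => lintegral_coord hQ i.succ

/-- min-max interchange for the penalised primal problem:
under the stated assumptions, with `G^{(N)} = G − N λ_𝔓`,
`inf_N sup_{M⁻_μ} E[G^{(N)}] = sup_{M⁻_μ} inf_N E[G^{(N)}] = sup_{M⁻_{μ,𝔓}} E[G]`. -/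
theorem minmax_penalised
    {n : ℕ} (hn : 1 ≤ n) {s₀ : ℝ} (hs₀ : 0 < s₀)
    (μ : Fin n → Measure ℝ) (hprob : ∀ i, IsProbabilityMeasure (μ i))
    (hsupp : ∀ i, μ i (Set.Iio 0) = 0) (hmom : ∀ i, Integrable (fun x => x) (μ i))
    (P : Set (Path n)) (hPsub : P ⊆ Omega n s₀) (hPclosed : IsClosed P)
    (hne : (MSetP s₀ μ P).Nonempty)
    (G : (Fin n → ℝ) → EReal) (hGtop : ∀ s, G s ≠ ⊤)
    (hGusc : UpperSemicontinuousOn G {s | ∀ i, 0 ≤ s i})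
    (K : ℝ) (hG : ∀ s : Fin n → ℝ, (∀ i, 0 ≤ s i) → G s ≤ ((K * (1 + ∑ i, s i) : ℝ) : EReal))
    (hfin : ⊥ < ⨆ Q ∈ MSetP s₀ μ P, eexpE Q (fun ω => G (tailCoords ω))) :
    (⨅ (N : ℕ) (_ : 1 ≤ N), ⨆ Q ∈ MSet s₀ μ,
        eexpE Q (fun ω => G (tailCoords ω) - (((N : ℝ) * lambdaP P ω : ℝ) : EReal))) =
      (⨆ Q ∈ MSet s₀ μ, ⨅ (N : ℕ) (_ : 1 ≤ N),
        eexpE Q (fun ω => G (tailCoords ω) - (((N : ℝ) * lambdaP P ω : ℝ) : EReal))) ∧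
    (⨆ Q ∈ MSet s₀ μ, ⨅ (N : ℕ) (_ : 1 ≤ N),
        eexpE Q (fun ω => G (tailCoords ω) - (((N : ℝ) * lambdaP P ω : ℝ) : EReal))) =
      ⨆ Q ∈ MSetP s₀ μ P, eexpE Q (fun ω => G (tailCoords ω)) := by
  -- reduce to a nonnegative constant
  set K' : ℝ := max K 0 with hK'
  have hK0 : 0 ≤ K' := le_max_right _ _
  have hG' : ∀ s : Fin n → ℝ, (∀ i, 0 ≤ s i) →
      G s ≤ ((K' * (1 + ∑ i, s i) : ℝ) : EReal) := by
    intro s hs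
    refine (hG s hs).trans ?_
    have h0 : 0 ≤ ∑ i, s i := Finset.sum_nonneg fun i _ => hs i
    have : K * (1 + ∑ i, s i) ≤ K' * (1 + ∑ i, s i) :=
      mul_le_mul_of_nonneg_right (le_max_left _ _) (by linarith)
    exact_mod_cast this
  obtain ⟨I, hI, hIeq⟩ := exists_const (s₀ := s₀) hmom hK0
  have hform : ∀ Q ∈ PiMu s₀ μ, ∀ N : ℕ,
      eexpE Q (fun ω => G (tailCoords ω) - (((N : ℝ) * lambdaP P ω : ℝ) : EReal)) =
      (I : EReal) - ((∫⁻ ω, (gapE s₀ K' G ω + N * lamE P ω) ∂(Q : Measure (Path n)) : ℝ≥0∞) :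
        EReal) := fun Q hQ N =>
    eexpE_pen hmom hQ hPclosed hGtop hGusc hK0 hG' hI (hIeq Q hQ) N
  have hform0 : ∀ Q ∈ PiMu s₀ μ, eexpE Q (fun ω => G (tailCoords ω)) =
      (I : EReal) - ((∫⁻ ω, gapE s₀ K' G ω ∂(Q : Measure (Path n)) : ℝ≥0∞) : EReal) := by
    intro Q hQ
    have := hform Q hQ 0
    simpa using this
  -- `sup inf ≤ inf sup`
  have h1 : (⨆ Q ∈ MSet s₀ μ, ⨅ (N : ℕ) (_ : 1 ≤ N),
        eexpE Q (fun ω => G (tailCoords ω) - (((N : ℝ) * lambdaP P ω : ℝ) : EReal))) ≤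
      (⨅ (N : ℕ) (_ : 1 ≤ N), ⨆ Q ∈ MSet s₀ μ,
        eexpE Q (fun ω => G (tailCoords ω) - (((N : ℝ) * lambdaP P ω : ℝ) : EReal))) := by
    refine le_iInf₂ fun N hN => iSup₂_le fun Q hQ => ?_
    exact (iInf₂_le N hN).trans (le_iSup₂ (f := fun Q _ => eexpE Q (fun ω =>
      G (tailCoords ω) - (((N : ℝ) * lambdaP P ω : ℝ) : EReal))) Q hQ)
  -- `sup over M_P ≤ sup inf`
  have h2 : (⨆ Q ∈ MSetP s₀ μ P, eexpE Q (fun ω => G (tailCoords ω))) ≤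
      (⨆ Q ∈ MSet s₀ μ, ⨅ (N : ℕ) (_ : 1 ≤ N),
        eexpE Q (fun ω => G (tailCoords ω) - (((N : ℝ) * lambdaP P ω : ℝ) : EReal))) := by
    refine iSup₂_le fun Q hQ => ?_
    refine le_trans ?_ (le_iSup₂ (f := fun Q _ => ⨅ (N : ℕ) (_ : 1 ≤ N), eexpE Q (fun ω =>
      G (tailCoords ω) - (((N : ℝ) * lambdaP P ω : ℝ) : EReal))) Q hQ.1)
    refine le_iInf₂ fun N _ => ?_
    rw [hform Q hQ.1.1, hform0 Q hQ.1.1]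
    have hp := hQ.1.1.1
    have hPae : ∀ᵐ ω ∂Q, ω ∈ P := (mem_ae_iff_prob_eq_one hPclosed.measurableSet).2 hQ.2
    have : ∫⁻ ω, (gapE s₀ K' G ω + N * lamE P ω) ∂(Q : Measure (Path n)) =
        ∫⁻ ω, gapE s₀ K' G ω ∂(Q : Measure (Path n)) := by
      apply lintegral_congr_ae
      filter_upwards [hPae] with ω hω
      simp [lamE, hω]
    rw [this]
  -- the compactness argument
  have h3 : (⨅ (N : ℕ) (_ : 1 ≤ N), ⨆ Q ∈ MSet s₀ μ,
        eexpE Q (fun ω => G (tailCoords ω) - (((N : ℝ) * lambdaP P ω : ℝ) : EReal))) ≤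
      ⨆ Q ∈ MSetP s₀ μ P, eexpE Q (fun ω => G (tailCoords ω)) := by
    refine le_of_forall_lt fun c hc => ?_
    obtain ⟨r, hcr, hr⟩ := EReal.lt_iff_exists_real_btwn.1 hc
    refine hcr.trans_le ?_
    have hex : ∀ k : ℕ, ∃ Q : ProbabilityMeasure (Path n), (Q : Measure (Path n)) ∈ MSet s₀ μ ∧
        (r : EReal) < (I : EReal) - ((∫⁻ ω, (gapE s₀ K' G ω + (k + 1 : ℕ) * lamE P ω)
          ∂(Q : Measure (Path n)) : ℝ≥0∞) : EReal) := by
      intro k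
      have hk := hr.trans_le (iInf₂_le (k + 1) (by omega))
      obtain ⟨Q, hk⟩ := lt_iSup_iff.1 hk
      obtain ⟨hQ, hk⟩ := lt_iSup_iff.1 hk
      rw [hform Q hQ.1] at hk
      exact ⟨⟨Q, hQ.1.1⟩, hQ, hk⟩
    choose Qs hQs hQr using hex
    lift I to ℝ≥0 using hI
    -- bounds on the gap integrals
    have hbound : ∀ k, r < I ∧ ∫⁻ ω, (gapE s₀ K' G ω + (k + 1 : ℕ) * lamE P ω)
          ∂(Qs k : Measure (Path n)) ≤ ENNReal.ofReal (I - r) := by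
      intro k
      have hk := hQr k
      generalize ∫⁻ ω, (gapE s₀ K' G ω + (k + 1 : ℕ) * lamE P ω) ∂(Qs k : Measure (Path n)) = a
        at hk
      have hat : a ≠ ⊤ := by
        rintro rfl
        simp [sub_eq_add_neg] at hk
      lift a to ℝ≥0 using hat
      rw [EReal.coe_nnreal_eq_coe_real, EReal.coe_nnreal_eq_coe_real, ← EReal.coe_sub,
        EReal.coe_lt_coe_iff] at hk
      have ha := a.2
      refine ⟨by linarith [a.coe_nonneg], ?_⟩
      rw [← ENNReal.ofReal_coe_nnreal]
      exact ENNReal.ofReal_le_ofReal (by linarith)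
    have hrI := (hbound 0).1
    obtain ⟨Q, φ, hφ, hlim⟩ := exists_subseq hprob Qs (fun k => (hQs k).1)
    have hQ : (Q : Measure (Path n)) ∈ MSet s₀ μ :=
      MSet_limit hprob hmom (fun k => hQs (φ k)) hlim
    have hgl := lsc_gapE (s₀ := s₀) (K := K') hGtop hGusc
    have hll := lsc_lamE hPclosed
    have hM : ∀ M : ℕ, ∫⁻ ω, (gapE s₀ K' G ω + M * lamE P ω) ∂(Q : Measure (Path n)) ≤
        ENNReal.ofReal (I - r) := by
      intro M
      have hcM : LowerSemicontinuous (fun ω : Path n => (M : ℝ≥0∞) * lamE P ω) := by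
        have : Continuous (fun x : ℝ≥0∞ => (M : ℝ≥0∞) * x) :=
          ENNReal.continuous_const_mul (ENNReal.natCast_ne_top M)
        exact this.comp_lowerSemicontinuous hll (fun a b hab => mul_le_mul_right hab _)
      refine (lintegral_le_liminf_of_lsc hlim (hgl.add hcM)).trans ?_
      refine liminf_le_of_frequently_le' (Eventually.frequently ?_)
      filter_upwards [eventually_ge_atTop M] with k hk
      refine le_trans (lintegral_mono fun ω => ?_) (hbound (φ k)).2
      have : M ≤ φ k + 1 := hk.trans ((hφ.id_le k).trans (Nat.le_succ _))
      gcongr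
    have hsplit : ∀ M : ℕ, ∫⁻ ω, (gapE s₀ K' G ω + M * lamE P ω) ∂(Q : Measure (Path n)) =
        ∫⁻ ω, gapE s₀ K' G ω ∂(Q : Measure (Path n)) +
          M * ∫⁻ ω, lamE P ω ∂(Q : Measure (Path n)) := by
      intro M
      rw [lintegral_add_left hgl.measurable, lintegral_const_mul _ hll.measurable]
    have hlam : ∫⁻ ω, lamE P ω ∂(Q : Measure (Path n)) = 0 := by
      by_contra hne0
      obtain ⟨M, hMgt⟩ := ENNReal.exists_nat_mul_gt hne0 (ENNReal.ofReal_ne_top (r := I - r))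
      have := hM M
      rw [hsplit] at this
      exact absurd (le_add_self.trans this) (not_le.2 hMgt)
    have hPae : ∀ᵐ ω ∂(Q : Measure (Path n)), ω ∈ P := by
      rw [lintegral_eq_zero_iff hll.measurable] at hlam
      filter_upwards [hlam, ae_Omega hQ.1] with ω h0 hω
      by_contra hωP
      have hw := wgt_nonneg hω
      simp only [lamE, hωP, if_false, Pi.zero_apply, ENNReal.ofReal_eq_zero] at h0
      linarith
    have hQP : (Q : Measure (Path n)) ∈ MSetP s₀ μ P :=
      ⟨hQ, (mem_ae_iff_prob_eq_one hPclosed.measurableSet).1 hPae⟩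
    refine le_trans ?_ (le_iSup₂ (f := fun Q _ => eexpE Q (fun ω => G (tailCoords ω)))
      (Q : Measure (Path n)) hQP)
    rw [hform0 _ hQ.1]
    have h0 := hM 0
    simp only [Nat.cast_zero, zero_mul, add_zero] at h0
    generalize ∫⁻ ω, gapE s₀ K' G ω ∂(Q : Measure (Path n)) = a at h0
    have hat : a ≠ ⊤ := ne_top_of_le_ne_top ENNReal.ofReal_ne_top h0
    lift a to ℝ≥0 using hat
    rw [← ENNReal.ofReal_coe_nnreal, ENNReal.ofReal_le_ofReal_iff (by linarith)] at h0
    rw [EReal.coe_nnreal_eq_coe_real, EReal.coe_nnreal_eq_coe_real, ← EReal.coe_sub,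
      EReal.coe_le_coe_iff]
    linarith
  exact ⟨le_antisymm (h3.trans h2) h1, le_antisymm (h1.trans h3) h2⟩

end RobustFin
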